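/- If equations (H1), (H2) and (H3) hold on I, then α₂''(s) − 2 = α₁''(s)(tanh(α₁(s)) + coth(α₁(s))) and 2 α₁'(s) α₂'(s) coth(2α₁(s)) = −2 − α₁'(s)² for all s ∈ I; in particular α₁'(s) ≠ 0 and α₂'(s) ≠ 0 for every s ∈ I. -/

import Mathlib

/-!
Write `a = α₁'` and `b = α₂'`. Since `tanh α₁ ≠ coth α₁`, the last two soliton equations force
`a' = a b` and `λ = 2 b²`, so the first one becomes `b' - 2 = a' (tanh α₁ + coth α₁)`.
Differentiating `a² + b² = 1` gives `b (a² + b') = 0`, so `b' = -a²` wherever `b ≠ 0`; there the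
identity `tanh x + coth x = 2 coth (2x)` turns the previous equation into the second claim.

It remains to exclude zeros of `b`. At a zero, `a' = 0` and so `b' = 2`; hence the zero is isolated
and `b' = -a² ≤ 0` on a punctured neighbourhood, which contradicts `b' = 2` by continuity of `b'`.
-/

/-- The hyperbolic cotangent `coth x = cosh x / sinh x`. -/
noncomputable def Real.coth (x : ℝ) : ℝ := Real.cosh x / Real.sinh x

theorem tanh_add_coth {x : ℝ} (hx : Real.sinh x ≠ 0) :
    Real.tanh x + Real.coth x = 2 * Real.coth (2 * x) := by
  have hc : Real.cosh x ≠ 0 := (Real.cosh_pos x).ne'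
  rw [Real.coth, Real.coth, Real.tanh_eq_sinh_div_cosh, Real.cosh_two_mul, Real.sinh_two_mul]
  field_simp
  ring

theorem tanh_ne_coth {x : ℝ} (hx : Real.sinh x ≠ 0) : Real.tanh x ≠ Real.coth x := by
  have hc : Real.cosh x ≠ 0 := (Real.cosh_pos x).ne'
  rw [Real.coth, Real.tanh_eq_sinh_div_cosh, Ne, div_eq_div_iff hc hx]
  nlinarith [Real.cosh_sq x]

open Filter Topology in
/-- If `b' ≤ 0` at all points near `s` where `b ≠ 0`, then `b' ≤ 0` at `s` too, even if `b s = 0`: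
when `b' s > 0`, the function `b` has no zeros near `s` other than possibly `s` itself, and the
inequality `b' ≤ 0` passes to the limit. -/
theorem deriv_nonpos_of_ne_zero_imp {b : ℝ → ℝ} {s : ℝ} (hd : DifferentiableAt ℝ b s)
    (hc : ContinuousAt (deriv b) s)
    (h : ∀ᶠ t in 𝓝 s, b t ≠ 0 → deriv b t ≤ 0) : deriv b s ≤ 0 := by
  by_contra hpos
  have hne : ∀ᶠ t in 𝓝[≠] s, b t ≠ 0 := hd.hasDerivAt.eventually_ne (by
    intro h0
    exact hpos h0.le)
  have hle : ∀ᶠ t in 𝓝[≠] s, deriv b t ≤ 0 := by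
    filter_upwards [hne, h.filter_mono nhdsWithin_le_nhds] with t h1 h2 using h2 h1
  exact hpos (le_of_tendsto (hc.tendsto.mono_left nhdsWithin_le_nhds) hle)

/-- if (H1), (H2) and (H3) hold on `I`, then
`α₂'' − 2 = α₁''(tanh α₁ + coth α₁)` and `2 α₁' α₂' coth(2α₁) = −2 − (α₁')²` on `I`;
in particular `α₁' ≠ 0` and `α₂' ≠ 0` on `I`. -/
theorem stmt15
    (I : Set ℝ) (hIopen : IsOpen I) (hIne : I.Nonempty) (hIconn : I.OrdConnected)
    (α₁ α₂ lam : ℝ → ℝ)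
    (hα₁ : ContDiff ℝ (⊤ : ℕ∞) α₁) (hα₂ : ContDiff ℝ (⊤ : ℕ∞) α₂) (hlam : ContDiff ℝ (⊤ : ℕ∞) lam)
    (hunit : ∀ s ∈ I, (deriv α₁ s) ^ 2 + (deriv α₂ s) ^ 2 = 1)
    (hsinh : ∀ s ∈ I, 0 < Real.sinh (α₁ s))
    (hH1 : ∀ s ∈ I, deriv (deriv α₂) s
        - deriv (deriv α₁) s * (Real.tanh (α₁ s) + Real.coth (α₁ s))
        - 2 * (deriv α₁ s) ^ 2 = lam s)
    (hH2 : ∀ s ∈ I, (deriv α₁ s * deriv α₂ s - deriv (deriv α₁) s) * Real.tanh (α₁ s)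
        + 2 * (deriv α₂ s) ^ 2 = lam s)
    (hH3 : ∀ s ∈ I, (deriv α₁ s * deriv α₂ s - deriv (deriv α₁) s) * Real.coth (α₁ s)
        + 2 * (deriv α₂ s) ^ 2 = lam s) :
    ∀ s ∈ I, deriv (deriv α₂) s - 2
        = deriv (deriv α₁) s * (Real.tanh (α₁ s) + Real.coth (α₁ s)) ∧
      2 * deriv α₁ s * deriv α₂ s * Real.coth (2 * α₁ s) = -2 - (deriv α₁ s) ^ 2 ∧
      deriv α₁ s ≠ 0 ∧ deriv α₂ s ≠ 0 := by
  have hd1 : ContDiff ℝ 1 (deriv α₁) :=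
    ContDiff.deriv' (n := 1) (contDiff_infty.1 hα₁ 2)
  have hd2 : ContDiff ℝ 1 (deriv α₂) :=
    ContDiff.deriv' (n := 1) (contDiff_infty.1 hα₂ 2)
  have hD1 : Differentiable ℝ (deriv α₁) := hd1.differentiable one_ne_zero
  have hD2 : Differentiable ℝ (deriv α₂) := hd2.differentiable one_ne_zero
  have hA : ∀ s ∈ I, deriv (deriv α₁) s = deriv α₁ s * deriv α₂ s := by
    intro s hs
    have h := mul_eq_zero.1 (show (deriv α₁ s * deriv α₂ s - deriv (deriv α₁) s) *
      (Real.tanh (α₁ s) - Real.coth (α₁ s)) = 0 by linarith [hH2 s hs, hH3 s hs])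
    have hne := sub_ne_zero.2 (tanh_ne_coth (hsinh s hs).ne')
    linarith [h.resolve_right hne]
  have hB : ∀ s ∈ I, deriv (deriv α₂) s - 2
      = deriv (deriv α₁) s * (Real.tanh (α₁ s) + Real.coth (α₁ s)) := by
    intro s hs
    have h2 := hH2 s hs
    rw [← hA s hs, sub_self, zero_mul] at h2
    linarith [hH1 s hs, hunit s hs]
  have hC : ∀ s ∈ I, deriv α₂ s ≠ 0 → deriv (deriv α₂) s = -(deriv α₁ s) ^ 2 := by
    intro s hs hb
    have hder := ((hD1 s).hasDerivAt.pow 2).add ((hD2 s).hasDerivAt.pow 2)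
    have hconst : (deriv α₁ ^ 2 + deriv α₂ ^ 2) =ᶠ[nhds s] fun _ => (1 : ℝ) := by
      filter_upwards [hIopen.mem_nhds hs] with t ht using hunit t ht
    have h0 := hder.unique ((hasDerivAt_const s (1 : ℝ)).congr_of_eventuallyEq hconst)
    rw [hA s hs] at h0
    apply mul_left_cancel₀ hb
    norm_num at h0
    linarith
  have hbne : ∀ s ∈ I, deriv α₂ s ≠ 0 := by
    intro s hs hb
    have hle : deriv (deriv α₂) s ≤ 0 := by
      refine deriv_nonpos_of_ne_zero_imp (hD2 s) (hd2.continuous_deriv le_rfl).continuousAt ?_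
      filter_upwards [hIopen.mem_nhds hs] with t ht hbt
      rw [hC t ht hbt]
      exact neg_nonpos.2 (sq_nonneg _)
    have h := hB s hs
    rw [hA s hs, hb] at h
    linarith
  intro s hs
  have hkey : 2 * deriv α₁ s * deriv α₂ s * Real.coth (2 * α₁ s) = -2 - (deriv α₁ s) ^ 2 := by
    have h := hB s hs
    rw [hA s hs, hC s hs (hbne s hs), tanh_add_coth (hsinh s hs).ne'] at h
    linarith
  refine ⟨hB s hs, hkey, ?_, hbne s hs⟩
  intro ha
  rw [ha] at hkey
  norm_num at hkey
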